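/- Let A be a Nakayama algebra. Then fin-pro A = max over the simple modules S of e(S), where e(S) = min{pd S, pd IS}. -/

import Mathlib

open CategoryTheory CategoryTheory.Limits

noncomputable section

namespace ArtinAlg

variable (A : Type) [Ring A]

/-- `M` admits a projective resolution of length at most `n`. -/
inductive ProjDimLE : ℕ → ModuleCat.{0} A → Prop
  | zero (M : ModuleCat.{0} A) (h : Projective M) : ProjDimLE 0 M
  | succ (n : ℕ) (M P : ModuleCat.{0} A) (f : P ⟶ M) (hP : Projective P) (hf : Epi f)
      (h : ProjDimLE n (kernel f)) : ProjDimLE (n + 1) M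

/-- `M` admits an injective coresolution of length at most `n`. -/
inductive InjDimLE : ℕ → ModuleCat.{0} A → Prop
  | zero (M : ModuleCat.{0} A) (h : Injective M) : InjDimLE 0 M
  | succ (n : ℕ) (M I : ModuleCat.{0} A) (f : M ⟶ I) (hI : Injective I) (hf : Mono f)
      (h : InjDimLE n (cokernel f)) : InjDimLE (n + 1) M

/-- The projective dimension `pd M ∈ ℕ∞`. -/
def projDim (M : ModuleCat.{0} A) : ℕ∞ :=
  sInf {d : ℕ∞ | ∃ n : ℕ, d = n ∧ ProjDimLE A n M}

/-- The injective dimension `id M ∈ ℕ∞`. -/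
def injDim (M : ModuleCat.{0} A) : ℕ∞ :=
  sInf {d : ℕ∞ | ∃ n : ℕ, d = n ∧ InjDimLE A n M}

/-- `f : P ⟶ M` is a projective cover: `P` is projective and `f` is an essential
(superfluous) epimorphism. -/
def IsProjectiveCoverHom {P M : ModuleCat.{0} A} (f : P ⟶ M) : Prop :=
  Projective P ∧ Epi f ∧ ∀ (N : ModuleCat.{0} A) (g : N ⟶ P), Epi (g ≫ f) → Epi g

/-- `P` is a projective cover of `M`. -/
def IsProjCoverOf (M P : ModuleCat.{0} A) : Prop :=
  ∃ f : P ⟶ M, IsProjectiveCoverHom A f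

/-- `f : M ⟶ I` is an injective envelope: `I` is injective and `f` is an essential
monomorphism. -/
def IsInjectiveEnvelopeHom {M I : ModuleCat.{0} A} (f : M ⟶ I) : Prop :=
  Injective I ∧ Mono f ∧ ∀ (N : ModuleCat.{0} A) (g : I ⟶ N), Mono (f ≫ g) → Mono g

/-- `I` is an injective envelope of `M`. -/
def IsInjEnvOf (M I : ModuleCat.{0} A) : Prop :=
  ∃ f : M ⟶ I, IsInjectiveEnvelopeHom A f

/-- `X ≅ Ω M`, the kernel of a projective cover of `M`. -/
def IsSyzygyOf (M X : ModuleCat.{0} A) : Prop :=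
  ∃ (P : ModuleCat.{0} A) (f : P ⟶ M), IsProjectiveCoverHom A f ∧ Nonempty (X ≅ kernel f)

/-- `X ≅ Σ M`, the cokernel of an injective envelope of `M`. -/
def IsCosyzygyOf (M X : ModuleCat.{0} A) : Prop :=
  ∃ (I : ModuleCat.{0} A) (f : M ⟶ I), IsInjectiveEnvelopeHom A f ∧ Nonempty (X ≅ cokernel f)

/-- `X ≅ Ω^n M`. -/
def IsNthSyzygy : ℕ → ModuleCat.{0} A → ModuleCat.{0} A → Prop
  | 0, M, X => Nonempty (X ≅ M)
  | n + 1, M, X => ∃ Y, IsSyzygyOf A M Y ∧ IsNthSyzygy n Y X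

/-- `X ≅ Σ^n M`. -/
def IsNthCosyzygy : ℕ → ModuleCat.{0} A → ModuleCat.{0} A → Prop
  | 0, M, X => Nonempty (X ≅ M)
  | n + 1, M, X => ∃ Y, IsCosyzygyOf A M Y ∧ IsNthCosyzygy n Y X

/-- `X` is a direct summand of `Y`. -/
def IsDirectSummandOf (X Y : ModuleCat.{0} A) : Prop :=
  ∃ (i : X ⟶ Y) (r : Y ⟶ X), i ≫ r = 𝟙 X

/-- `X ∈ add W` : `X` is a direct summand of a finite direct sum of copies of `W`. -/
def InAdd (X W : ModuleCat.{0} A) : Prop :=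
  ∃ n : ℕ, IsDirectSummandOf A X (ModuleCat.of A (Fin n → ↥W))

/-- The delooping level of `M` is at most `d` :
`Ω^d M ∈ add (A ⊕ Ω^{d+1} M')` for some finitely generated `M'`. -/
def DelLE (d : ℕ) (M : ModuleCat.{0} A) : Prop :=
  ∃ X, IsNthSyzygy A d M X ∧
    ∃ M' : ModuleCat.{0} A, Module.Finite A ↥M' ∧
      ∃ X', IsNthSyzygy A (d + 1) M' X' ∧ InAdd A X (ModuleCat.of A (A × ↥X'))

/-- The delooping level `del M ∈ ℕ∞`. -/
def delLevel (M : ModuleCat.{0} A) : ℕ∞ :=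
  sInf {d : ℕ∞ | ∃ n : ℕ, d = n ∧ DelLE A n M}

/-- The delooping level of the algebra: the supremum of `del S` over the simple modules. -/
def delAlg : ℕ∞ :=
  sSup {d : ℕ∞ | ∃ S : ModuleCat.{0} A, IsSimpleModule A ↥S ∧ delLevel A S = d}

/-- `Q` is a minimal injective cogenerator: the injective envelope of the direct sum of
a complete set of representatives of the simple modules. -/
def IsMinimalInjectiveCogenerator (Q : ModuleCat.{0} A) : Prop :=
  ∃ (ι : Type) (_ : Fintype ι) (S : ι → ModuleCat.{0} A),
    (∀ i, IsSimpleModule A ↥(S i)) ∧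
    (∀ T : ModuleCat.{0} A, IsSimpleModule A ↥T → ∃! i, Nonempty (↥T ≃ₗ[A] ↥(S i))) ∧
    IsInjEnvOf A (ModuleCat.of A (∀ i, ↥(S i))) Q

/-- The desuspending level of `M` is at most `d` :
`Σ^d M ∈ add (D(A) ⊕ Σ^{d+1} M')` for some finitely generated `M'`. -/
def DesLE (d : ℕ) (M : ModuleCat.{0} A) : Prop :=
  ∃ X, IsNthCosyzygy A d M X ∧
    ∃ Q, IsMinimalInjectiveCogenerator A Q ∧
      ∃ M' : ModuleCat.{0} A, Module.Finite A ↥M' ∧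
        ∃ X', IsNthCosyzygy A (d + 1) M' X' ∧ InAdd A X (ModuleCat.of A (↥Q × ↥X'))

/-- The desuspending level `des M ∈ ℕ∞`. -/
def desLevel (M : ModuleCat.{0} A) : ℕ∞ :=
  sInf {d : ℕ∞ | ∃ n : ℕ, d = n ∧ DesLE A n M}

/-- The desuspending level of the algebra. -/
def desAlg : ℕ∞ :=
  sSup {d : ℕ∞ | ∃ S : ModuleCat.{0} A, IsSimpleModule A ↥S ∧ desLevel A S = d}

/-- The (small) finitistic projective dimension `fin-pro A`. -/
def finProDim : ℕ∞ :=
  sSup {d : ℕ∞ | ∃ M : ModuleCat.{0} A, Module.Finite A ↥M ∧ projDim A M = d ∧ d ≠ ⊤}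

/-- The (small) finitistic injective dimension `fin-inj A`. -/
def finInjDim : ℕ∞ :=
  sSup {d : ℕ∞ | ∃ M : ModuleCat.{0} A, Module.Finite A ↥M ∧ injDim A M = d ∧ d ≠ ⊤}

/-- The big finitistic projective dimension `Fin-pro A`. -/
def bigFinProDim : ℕ∞ :=
  sSup {d : ℕ∞ | ∃ M : ModuleCat.{0} A, projDim A M = d ∧ d ≠ ⊤}

/-- The big finitistic injective dimension `Fin-inj A`. -/
def bigFinInjDim : ℕ∞ :=
  sSup {d : ℕ∞ | ∃ M : ModuleCat.{0} A, injDim A M = d ∧ d ≠ ⊤}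

/-- `M` is an indecomposable nonzero module. -/
def Indec (M : ModuleCat.{0} A) : Prop :=
  Nontrivial ↥M ∧ ∀ (N₁ N₂ : Submodule A ↥M), IsCompl N₁ N₂ → N₁ = ⊥ ∨ N₂ = ⊥

/-- `M` is serial (uniserial): its submodules form a chain. -/
def IsUniserial (M : ModuleCat.{0} A) : Prop :=
  ∀ N₁ N₂ : Submodule A ↥M, N₁ ≤ N₂ ∨ N₂ ≤ N₁

/-- `A` is a Nakayama algebra: all finitely generated indecomposable modules are serial. -/
def IsNakayama : Prop :=
  ∀ M : ModuleCat.{0} A, Module.Finite A ↥M → Indec A M → IsUniserial A M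

/-- `A` is connected: it is not a nontrivial product of algebras. -/
def IsConnectedAlgebra : Prop :=
  Nontrivial A ∧ ∀ e : A, IsIdempotentElem e → e ∈ Set.center A → e = 0 ∨ e = 1

/-- `A` is a cyclic Nakayama algebra: connected Nakayama with no simple projective module. -/
def IsCyclicNakayama : Prop :=
  IsNakayama A ∧ IsConnectedAlgebra A ∧
    ¬ ∃ S : ModuleCat.{0} A, IsSimpleModule A ↥S ∧ Projective S

/-- `T ≅ top M` (and `top M` is simple): there is an essential epimorphism `M ⟶ T`. -/
def IsSimpleTopOf (M T : ModuleCat.{0} A) : Prop :=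
  IsSimpleModule A ↥T ∧
    ∃ f : M ⟶ T, Epi f ∧ ∀ (N : ModuleCat.{0} A) (g : N ⟶ M), Epi (g ≫ f) → Epi g

/-- `S ≅ soc M` (and `soc M` is simple): there is an essential monomorphism `S ⟶ M`. -/
def IsSimpleSocOf (M S : ModuleCat.{0} A) : Prop :=
  IsSimpleModule A ↥S ∧
    ∃ f : S ⟶ M, Mono f ∧ ∀ (N : ModuleCat.{0} A) (g : M ⟶ N), Mono (f ≫ g) → Mono g

/-- `0 ⟶ N ⟶ E ⟶ M ⟶ 0` is an almost split (Auslander-Reiten) sequence. -/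
def IsAlmostSplitSeq {N E M : ModuleCat.{0} A} (f : N ⟶ E) (g : E ⟶ M) : Prop :=
  Mono f ∧ Epi g ∧ (∃ w : f ≫ g = 0, (ShortComplex.mk f g w).Exact) ∧
  (¬ ∃ s : M ⟶ E, s ≫ g = 𝟙 M) ∧ Indec A N ∧ Indec A M ∧
  ∀ (X : ModuleCat.{0} A) (h : X ⟶ M), (¬ ∃ s : M ⟶ X, s ≫ h = 𝟙 M) → ∃ h' : X ⟶ E, h' ≫ g = h

/-- `N ≅ τ M`, the Auslander-Reiten translate of `M` : there is an almost split sequence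
`0 ⟶ N ⟶ E ⟶ M ⟶ 0`. -/
def IsTauOf (N M : ModuleCat.{0} A) : Prop :=
  ∃ (E : ModuleCat.{0} A) (f : N ⟶ E) (g : E ⟶ M), IsAlmostSplitSeq A f g

/-- `U ≅ ψ S = τ⁻ top (I S)`. -/
def IsPsiOf (S U : ModuleCat.{0} A) : Prop :=
  ∃ I, IsInjEnvOf A S I ∧ ∃ T, IsSimpleTopOf A I T ∧ IsTauOf A T U

/-- `T ≅ γ S = τ soc (P S)`. -/
def IsGammaOf (S T : ModuleCat.{0} A) : Prop :=
  ∃ P, IsProjCoverOf A S P ∧ ∃ U, IsSimpleSocOf A P U ∧ IsTauOf A T U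

/-- `T ≅ φ S = top (I S)`. -/
def IsPhiOf (S T : ModuleCat.{0} A) : Prop :=
  ∃ I, IsInjEnvOf A S I ∧ IsSimpleTopOf A I T

/-- There is a `ψ`-path `(S_1, …, S_m)` of cardinality `m` ending in `S`. -/
def PsiPathTo (m : ℕ) (S : ModuleCat.{0} A) : Prop :=
  1 ≤ m ∧ ∃ c : ℕ → ModuleCat.{0} A,
    (∀ i < m, IsSimpleModule A ↥(c i)) ∧
    (∀ i, i + 1 < m → IsPsiOf A (c i) (c (i + 1))) ∧
    Nonempty (c (m - 1) ≅ S)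

/-- `a(S)`: the supremum of the cardinalities of `ψ`-paths ending in `S`. -/
def aVal (S : ModuleCat.{0} A) : ℕ∞ :=
  sSup {d : ℕ∞ | ∃ m : ℕ, d = m ∧ PsiPathTo A m S}

/-- `a(A)`: the maximum of `a(S)` over the simple modules which are not `ψ`-cyclic. -/
def aAlg : ℕ∞ :=
  sSup {d : ℕ∞ | ∃ S : ModuleCat.{0} A, IsSimpleModule A ↥S ∧ aVal A S ≠ ⊤ ∧ aVal A S = d}

/-- `S` is a composition factor of `M`: a simple subquotient of `M`. -/
def IsCompFactorOf (S M : ModuleCat.{0} A) : Prop :=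
  IsSimpleModule A ↥S ∧ ∃ N' N : Submodule A ↥M, N' ≤ N ∧
    Nonempty ((↥N ⧸ N'.comap N.subtype) ≃ₗ[A] ↥S)

/-- `e(S) = min {pd S, pd (I S)} = x`. -/
def ERelVal (S : ModuleCat.{0} A) (x : ℕ∞) : Prop :=
  ∃ I, IsInjEnvOf A S I ∧ x = min (projDim A S) (projDim A I)

/-- `e*(S) = min {id S, id (P S)} = x`. -/
def EStarVal (S : ModuleCat.{0} A) (x : ℕ∞) : Prop :=
  ∃ P, IsProjCoverOf A S P ∧ x = min (injDim A S) (injDim A P)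

/-- `T = h(S) = top (Ω^{e(S)} N S)`, the homological permutation. -/
def HRel (S T : ModuleCat.{0} A) : Prop :=
  IsSimpleModule A ↥S ∧ IsSimpleModule A ↥T ∧
  ∃ z : ℕ, ERelVal A S z ∧
    ∃ N, ((Odd z ∧ N = S) ∨ (Even z ∧ IsInjEnvOf A S N)) ∧
      ∃ X, IsNthSyzygy A z N X ∧ IsSimpleTopOf A X T

/-- `S = h*(T) = soc (Σ^{e*(T)} N* T)`, the inverse homological permutation. -/
def HStarRel (T S : ModuleCat.{0} A) : Prop :=
  IsSimpleModule A ↥T ∧ IsSimpleModule A ↥S ∧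
  ∃ z : ℕ, EStarVal A T z ∧
    ∃ N, ((Odd z ∧ N = T) ∨ (Even z ∧ IsProjCoverOf A T N)) ∧
      ∃ X, IsNthCosyzygy A z N X ∧ IsSimpleSocOf A X S

/-- The `t`-fold relational iterate of a relation on modules (up to isomorphism). -/
def IterRel (r : ModuleCat.{0} A → ModuleCat.{0} A → Prop) :
    ℕ → ModuleCat.{0} A → ModuleCat.{0} A → Prop
  | 0, X, Y => Nonempty (X ≅ Y)
  | n + 1, X, Y => ∃ Z, r X Z ∧ IterRel r n Z Y

end ArtinAlg

/-
Fix a Nakayama algebra and let `τ` permute the indecomposable projectives so that `P (τ v)` covers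
the radical of `P v`. Indecomposable modules then correspond to integer intervals `[a, b)`, read
along an orbit of `τ`: the projective cover of `[a, b)` is `[a, p a)` and its syzygy is `[b, p a)`,
where `p` is monotone and commutes with a translation. Hence the projective dimension of `[a, b)` is
governed by coincidences among the iterates of `p` at `a` and `b`.

The simple module `[j - 1, j)` has injective envelope `[c, j)`, where `c` is minimal with `j ≤ p c`.
If `[a, b)` has projective dimension `n + 1`, then some iterate `p ^ m` jumps at an integer `j`,
that is `p ^ m (j - 1) < p ^ m j`, while `p ^ k j`, for `k = n / 2`, is not in the range of
`p ^ (k + 1)`. No `[c, j)` then has projective dimension at most `n`, so the simple module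
`[j - 1, j)` and its injective envelope both have projective dimension greater than `n`.
Conversely, the range of `p ^ k` equals that of `p ^ (k + 1)` for large `k`, which forces one of
`[j - 1, j)` and its injective envelope to have finite projective dimension, so `e(S)` is at most
`fin-pro A` for every simple module `S`.
-/

namespace ArtinAlg

section Combinatorics

open scoped AddConstMap

variable {p : ℤ → ℤ}

/-- A uniserial module over a Nakayama algebra is encoded by an integer interval `[a, b)` and its
projective cover by `[a, p a)`, so that its syzygy is `[b, p a)`. `PdLE p n a b` is the statement
that the module encoded by `[a, b)` has projective dimension at most `n`. -/
def PdLE (p : ℤ → ℤ) : ℕ → ℤ → ℤ → Prop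
  | 0, a, b => a = b ∨ b = p a
  | n + 1, a, b => PdLE p n b (p a)

-- The `n`-th syzygy of `[a, b)` is `[xₙ, xₙ₊₁)` for `x₀ = a`, `x₁ = b`, `xₙ₊₂ = p xₙ`.
theorem pdLE_two_mul {k : ℕ} {a b : ℤ} :
    PdLE p (2 * k) a b ↔ p^[k] a = p^[k] b ∨ p^[k] b = p^[k + 1] a := by
  induction k generalizing a b with
  | zero => rfl
  | succ _ ih => exact ih

theorem pdLE_two_mul_add_one {k : ℕ} {a b : ℤ} :
    PdLE p (2 * k + 1) a b ↔ p^[k] b = p^[k + 1] a ∨ p^[k + 1] a = p^[k + 1] b :=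
  pdLE_two_mul

theorem not_pdLE_two_mul (hp : Monotone p) {k : ℕ} {c j : ℤ} (hcj : c < j)
    (hj : p^[k] (j - 1) < p^[k] j) (hkj : p^[k] j ∉ Set.range p^[k + 1]) :
    ¬ PdLE p (2 * k) c j := by
  rw [pdLE_two_mul, not_or]
  have hc : p^[k] c ≤ p^[k] (j - 1) := hp.iterate k (by omega)
  exact ⟨by omega, fun h => hkj ⟨c, h.symm⟩⟩

theorem not_pdLE_two_mul_add_one (hp : Monotone p) {k : ℕ} {c j : ℤ} (hcj : c < j)
    (hj : p^[k + 1] (j - 1) < p^[k + 1] j) (hkj : p^[k] j ∉ Set.range p^[k + 1]) :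
    ¬ PdLE p (2 * k + 1) c j := by
  rw [pdLE_two_mul_add_one, not_or]
  have hc : p^[k + 1] c ≤ p^[k + 1] (j - 1) := hp.iterate (k + 1) (by omega)
  exact ⟨fun h => hkj ⟨c, h.symm⟩, by omega⟩

variable {N : ℕ} {f : ℤ →+c[(N : ℤ), (N : ℤ)] ℤ}

theorem map_sub_map_of_intCast_eq {x y : ℤ} (h : (x : ZMod N) = y) : f y - f x = y - x := by
  obtain ⟨m, hm⟩ := (ZMod.intCast_eq_intCast_iff_dvd_sub x y N).1 h
  have hy : f (x + m • (N : ℤ)) = f x + m • (N : ℤ) := AddConstMapClass.map_add_zsmul f x m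
  obtain rfl : y = x + m • (N : ℤ) := by rw [smul_eq_mul]; linarith
  linarith

variable [NeZero N]

theorem exists_le_map_sub_one_lt (hf : Monotone f) (b : ℤ) :
    ∃ j ≤ b, f j = f b ∧ f (j - 1) < f j := by
  have hbdd : ∀ z, f z = f b → b - N ≤ z := fun z hz => by
    by_contra! hlt
    have hN : (0 : ℤ) < N := by exact_mod_cast NeZero.pos N
    have hsub : f (b - N) = f b - N := AddConstMapClass.map_sub_const f b
    have := hf hlt.le
    omega
  obtain ⟨j, hj, hmin⟩ := Int.exists_least_of_bdd (P := fun z => f z = f b) ⟨b - N, hbdd⟩ ⟨b, rfl⟩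
  refine ⟨j, hmin b rfl, hj, (hf (by omega)).lt_of_ne fun h => ?_⟩
  have := hmin (j - 1) (h.trans hj)
  omega

theorem injOn_of_subset_image {s : Set ℤ} (hs : s ⊆ f '' s) : Set.InjOn f s := by
  let T : Set (ZMod N) := (↑) '' s
  let q : ZMod N → ZMod N := fun t => f t.cast
  have hq : ∀ x : ℤ, q x = f x := fun x => by
    have := map_sub_map_of_intCast_eq (f := f) (x := x) (y := (x : ZMod N).cast) (by simp)
    rw [eq_comm, ZMod.intCast_eq_intCast_iff_dvd_sub, this, ← ZMod.intCast_eq_intCast_iff_dvd_sub]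
    simp
  have hT : T ⊆ q '' T := by
    rintro _ ⟨x, hx, rfl⟩
    obtain ⟨y, hy, rfl⟩ := hs hx
    exact ⟨y, ⟨y, hy, rfl⟩, hq y⟩
  have hinj : Set.InjOn q T := Set.injOn_of_ncard_image_eq
    ((Set.ncard_image_le T.toFinite).antisymm (Set.ncard_le_ncard hT))
  intro x hx y hy hxy
  have hmod : (x : ZMod N) = y := hinj ⟨x, hx, rfl⟩ ⟨y, hy, rfl⟩ (by rw [hq, hq, hxy])
  have := map_sub_map_of_intCast_eq (f := f) hmod
  omega

theorem injOn_range_iterate {k : ℕ} (hk : Set.range f^[k] ⊆ Set.range f^[k + 1]) :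
    Set.InjOn f (Set.range f^[k]) := by
  refine injOn_of_subset_image ?_
  rwa [← Set.range_comp, ← Function.iterate_succ']

theorem exists_range_iterate_subset (f : ℤ →+c[(N : ℤ), (N : ℤ)] ℤ) :
    ∃ k : ℕ, Set.range f^[k] ⊆ Set.range f^[k + 1] := by
  let T : ℕ → Set (ZMod N) := fun k => (↑) '' Set.range f^[k]
  have hanti : Antitone T := antitone_nat_of_succ_le fun k =>
    Set.image_mono (Set.range_comp_subset_range f f^[k])
  obtain ⟨k, hk⟩ := WellFoundedGT.monotone_chain_condition (α := (Set (ZMod N))ᵒᵈ)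
    ⟨fun k => OrderDual.toDual (T k), hanti⟩
  have hTk : T k = T (k + 1) := hk (k + 1) k.le_succ
  refine ⟨k, ?_⟩
  rintro _ ⟨x, rfl⟩
  have hx : ((f^[k] x : ℤ) : ZMod N) ∈ T (k + 1) := hTk ▸ ⟨_, ⟨x, rfl⟩, rfl⟩
  obtain ⟨_, ⟨y, rfl⟩, hy⟩ := hx
  have hshift := map_sub_map_of_intCast_eq (f := f ^ (k + 1)) (x := y)
    (y := y + (f^[k] x - f^[k + 1] y)) (by push_cast; rw [hy]; ring)
  rw [AddConstMap.coe_pow] at hshift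
  exact ⟨y + (f^[k] x - f^[k + 1] y), by linarith⟩

theorem exists_not_pdLE_two_mul (hf : Monotone f) {k : ℕ} {a b : ℤ}
    (h : PdLE f (2 * k + 1) a b) (h' : ¬ PdLE f (2 * k) a b) :
    ∃ j, ∀ c < j, ¬ PdLE f (2 * k) c j := by
  rw [pdLE_two_mul_add_one] at h
  rw [pdLE_two_mul, not_or] at h'
  have hker : f^[k + 1] a = f^[k + 1] b := h.resolve_left h'.2
  rw [Function.iterate_succ_apply', Function.iterate_succ_apply'] at hker
  have hrange : ¬ Set.range f^[k] ⊆ Set.range f^[k + 1] := fun hs =>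
    h'.1 (injOn_range_iterate hs ⟨a, rfl⟩ ⟨b, rfl⟩ hker)
  obtain ⟨_, ⟨x, rfl⟩, hx⟩ := Set.not_subset.1 hrange
  obtain ⟨j, -, hjx, hj⟩ := exists_le_map_sub_one_lt (f := f ^ k) (hf.iterate k) x
  rw [AddConstMap.coe_pow] at hjx hj
  exact ⟨j, fun c hc => not_pdLE_two_mul hf hc hj (hjx.symm ▸ hx)⟩

theorem exists_not_pdLE_two_mul_add_one (hf : Monotone f) {k : ℕ} {a b : ℤ} (hb : b ≤ f a)
    (h : PdLE f (2 * (k + 1)) a b) (h' : ¬ PdLE f (2 * k + 1) a b) :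
    ∃ j, ∀ c < j, ¬ PdLE f (2 * k + 1) c j := by
  rw [pdLE_two_mul] at h
  rw [pdLE_two_mul_add_one, not_or] at h'
  have hker : f^[k + 1] b = f^[k + 1 + 1] a := h.resolve_left h'.2
  have hjump := exists_le_map_sub_one_lt (f := f ^ (k + 1)) (hf.iterate (k + 1))
  suffices ∃ j, f^[k + 1] (j - 1) < f^[k + 1] j ∧ f^[k] j ∉ Set.range f^[k + 1] by
    obtain ⟨j, hj, hkj⟩ := this
    exact ⟨j, fun c hc => not_pdLE_two_mul_add_one hf hc hj hkj⟩
  by_contra! hall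
  have hinj : Set.InjOn f (Set.range f^[k + 1]) := injOn_range_iterate <| by
    rintro _ ⟨x, rfl⟩
    obtain ⟨j, -, hjx, hj⟩ := hjump x
    obtain ⟨y, hy⟩ := hall j hj
    refine ⟨y, ?_⟩
    rw [Function.iterate_succ_apply' f (k + 1), hy, ← Function.iterate_succ_apply' f k]
    exact hjx
  obtain ⟨j, hjb, hfj, hj⟩ := hjump b
  have hja : f^[k] j = f^[k + 1] a := hinj (hall j hj) ⟨a, rfl⟩ <| by
    rw [← Function.iterate_succ_apply' f k, ← Function.iterate_succ_apply' f (k + 1)]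
    exact Eq.trans hfj hker
  have hjb' : f^[k] j ≤ f^[k] b := hf.iterate k hjb
  have hba : f^[k] b ≤ f^[k + 1] a := hf.iterate k hb
  exact h'.1 (by omega)

theorem exists_not_pdLE (hf : Monotone f) {n : ℕ} {a b : ℤ} (hb : b ≤ f a)
    (h : PdLE f (n + 1) a b) (h' : ¬ PdLE f n a b) : ∃ j, ∀ c < j, ¬ PdLE f n c j := by
  obtain ⟨k, rfl | rfl⟩ := Nat.even_or_odd' n
  · exact exists_not_pdLE_two_mul hf h h'
  · exact exists_not_pdLE_two_mul_add_one hf hb h h'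

theorem exists_pdLE (hf : Monotone f) (j : ℤ) :
    ∃ n, PdLE f n (j - 1) j ∨ ∀ c, j ≤ f c → f (c - 1) < j → PdLE f n c j := by
  obtain ⟨k, hk⟩ := exists_range_iterate_subset f
  refine ⟨2 * k, or_iff_not_imp_left.2 fun hj c hjc hcj => pdLE_two_mul.2 (Or.inr ?_)⟩
  rw [pdLE_two_mul, not_or] at hj
  obtain ⟨z, hz⟩ := hk ⟨j, rfl⟩
  have hjc' : f^[k] j ≤ f^[k + 1] c := hf.iterate k hjc
  have hcj' : f^[k + 1] (c - 1) ≤ f^[k] (j - 1) := hf.iterate k (by omega)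
  have hj1 : f^[k] (j - 1) ≤ f^[k] j := hf.iterate k (by omega)
  have hcz : c ≤ z := by
    by_contra! hlt
    have : f^[k + 1] z ≤ f^[k + 1] (c - 1) := hf.iterate (k + 1) (by omega)
    omega
  have : f^[k + 1] c ≤ f^[k + 1] z := hf.iterate (k + 1) hcz
  omega

end Combinatorics

section Length

variable {A : Type*} [Ring A] {M N : Type*} [AddCommGroup M] [Module A M] [AddCommGroup N]
  [Module A N]

variable (A M) in
/-- The length of a module of finite length, as a natural number; it is `0` for a module of
infinite length. -/
def natLength : ℕ := (Module.length A M).toNat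

theorem natLength_congr (e : M ≃ₗ[A] N) : natLength A M = natLength A N := by
  rw [natLength, natLength, e.length_eq]

variable (A M) in
theorem coe_natLength [IsArtinian A M] [IsNoetherian A M] :
    (natLength A M : ℕ∞) = Module.length A M :=
  ENat.natCast_toNat_eq_self.2 Module.length_ne_top

theorem natLength_lt_of_lt {K L : Submodule A M} [IsArtinian A L] [IsNoetherian A L]
    (hKL : K < L) : natLength A K < natLength A L := by
  have := isArtinian_of_le hKL.le
  have := isNoetherian_of_le hKL.le
  have hlt : Module.length A K < Module.length A L := by
    rw [Module.length_submodule, Module.length_submodule]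
    exact Order.height_strictMono hKL (by
      rw [← Module.length_submodule]; exact Module.length_ne_top.lt_top)
  rwa [← coe_natLength, ← coe_natLength, Nat.cast_lt] at hlt

variable [IsArtinian A M] [IsNoetherian A M]

theorem natLength_eq_one_iff : natLength A M = 1 ↔ IsSimpleModule A M := by
  rw [← Module.length_eq_one_iff, ← coe_natLength, Nat.cast_eq_one]

theorem natLength_eq_zero_iff : natLength A M = 0 ↔ Subsingleton M := by
  rw [← Module.length_eq_zero_iff (R := A), ← coe_natLength, Nat.cast_eq_zero]

theorem natLength_quotient_add (K : Submodule A M) :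
    natLength A (M ⧸ K) + natLength A K = natLength A M := by
  have := Module.length_eq_add_of_exact K.subtype K.mkQ K.subtype_injective K.mkQ_surjective
    (LinearMap.exact_subtype_mkQ K)
  rw [← coe_natLength, ← coe_natLength, ← coe_natLength] at this
  exact_mod_cast (this.trans (add_comm _ _)).symm

theorem natLength_add_ker {f : M →ₗ[A] N} (hf : Function.Surjective f) :
    natLength A N + natLength A (LinearMap.ker f) = natLength A M := by
  rw [← natLength_quotient_add (LinearMap.ker f), natLength_congr (f.quotKerEquivOfSurjective hf)]

theorem natLength_le_of_surjective {f : M →ₗ[A] N} (hf : Function.Surjective f) :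
    natLength A N ≤ natLength A M :=
  natLength_add_ker hf ▸ Nat.le_add_right _ _

theorem natLength_lt_of_ne_top {K : Submodule A M} (hK : K ≠ ⊤) :
    natLength A K < natLength A M :=
  natLength_congr (Submodule.topEquiv (R := A) (M := M)) ▸ natLength_lt_of_lt hK.lt_top

end Length

section Uniserial

variable {A : Type*} [Ring A] {M N : Type*} [AddCommGroup M] [Module A M] [AddCommGroup N]
  [Module A N]

variable (A M) in
/-- An unbundled version of `IsUniserial`: the submodules of `M` form a chain. -/
def Uniserial : Prop := ∀ K L : Submodule A M, K ≤ L ∨ L ≤ K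

namespace Uniserial

theorem of_isSimpleModule [IsSimpleModule A M] : Uniserial A M := fun K _ =>
  (eq_bot_or_eq_top K).imp (fun h => h.trans_le bot_le) (fun h => le_top.trans h.ge)

theorem of_injective (hN : Uniserial A N) {f : M →ₗ[A] N} (hf : Function.Injective f) :
    Uniserial A M := fun K L =>
  (hN (K.map f) (L.map f)).imp (Submodule.map_le_map_iff_of_injective hf K L).1
    (Submodule.map_le_map_iff_of_injective hf L K).1

theorem of_surjective (hM : Uniserial A M) {f : M →ₗ[A] N} (hf : Function.Surjective f) :
    Uniserial A N := fun K L =>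
  (hM (K.comap f) (L.comap f)).imp (Submodule.comap_le_comap_iff_of_surjective hf).1
    (Submodule.comap_le_comap_iff_of_surjective hf).1

variable {K L : Submodule A M}

theorem submodule (hM : Uniserial A M) (K : Submodule A M) : Uniserial A K :=
  hM.of_injective K.subtype_injective

theorem eq_top_of_not_le_coatom (hM : Uniserial A M) (hK : IsCoatom K) (hL : ¬ L ≤ K) : L = ⊤ :=
  hK.2 L (lt_of_le_not_ge ((hM K L).resolve_right hL) hL)

theorem coatom_unique (hM : Uniserial A M) (hK : IsCoatom K) (hL : IsCoatom L) : K = L :=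
  (hK.le_iff_eq hL.1).1 (of_not_not fun h => hK.1 (hM.eq_top_of_not_le_coatom hL h)) |>.symm

theorem eq_of_natLength_eq (hM : Uniserial A M) [IsArtinian A M] [IsNoetherian A M]
    (h : natLength A K = natLength A L) : K = L := by
  rcases hM K L with hKL | hLK
  · exact hKL.eq_of_not_lt fun hlt => (natLength_lt_of_lt hlt).ne h
  · exact (hLK.eq_of_not_lt fun hlt => (natLength_lt_of_lt hlt).ne' h).symm

theorem nonempty_equiv_of_ne_zero (hM : Uniserial A M) {S T : Type*} [AddCommGroup S] [Module A S]
    [AddCommGroup T] [Module A T] [IsSimpleModule A S] [IsSimpleModule A T] {f : M →ₗ[A] S}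
    {g : M →ₗ[A] T} (hf : f ≠ 0) (hg : g ≠ 0) : Nonempty (S ≃ₗ[A] T) := by
  have hf' := LinearMap.surjective_of_ne_zero hf
  have hg' := LinearMap.surjective_of_ne_zero hg
  have hker : LinearMap.ker f = LinearMap.ker g := hM.coatom_unique
    (LinearMap.isCoatom_ker_of_surjective hf') (LinearMap.isCoatom_ker_of_surjective hg')
  exact ⟨(f.quotKerEquivOfSurjective hf').symm.trans <|
    (Submodule.quotEquivOfEq _ _ hker).trans (g.quotKerEquivOfSurjective hg')⟩

theorem injective_of_injective_comp (hM : Uniserial A M) {S : Type*} [AddCommGroup S] [Module A S]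
    [Nontrivial S] {j : S →ₗ[A] M} {g : M →ₗ[A] N} (h : Function.Injective (g ∘ₗ j)) :
    Function.Injective g := by
  rw [← LinearMap.ker_eq_bot]
  rcases hM (LinearMap.ker g) (LinearMap.range j) with hle | hle
  · refine eq_bot_iff.2 fun x hx => ?_
    obtain ⟨s, rfl⟩ := hle hx
    obtain rfl : s = 0 := h (hx.trans (map_zero (g ∘ₗ j)).symm)
    exact map_zero j
  · obtain ⟨s, hs⟩ := exists_ne (0 : S)
    exact absurd (h ((hle ⟨s, rfl⟩ : g (j s) = 0).trans (map_zero (g ∘ₗ j)).symm)) hs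

theorem injective_or_subsingleton_of_comp_eq_id (hM : Uniserial A M) {f : M →ₗ[A] N} {s : N →ₗ[A] M}
    (h : f ∘ₗ s = LinearMap.id) : Function.Injective f ∨ Subsingleton N := by
  have hfs : ∀ y, f (s y) = y := LinearMap.congr_fun h
  rcases hM (LinearMap.ker f) (LinearMap.range s) with hle | hle
  · refine Or.inl (LinearMap.ker_eq_bot.1 (eq_bot_iff.2 fun x hx => ?_))
    obtain ⟨y, rfl⟩ := hle hx
    obtain rfl : y = 0 := (hfs y).symm.trans hx
    exact map_zero s
  · exact Or.inr (subsingleton_of_forall_eq 0 fun y => (hfs y).symm.trans (hle ⟨y, rfl⟩))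

theorem projective_iff_of_surjective (hM : Uniserial A M) [Module.Projective A M] {f : M →ₗ[A] N}
    (hf : Function.Surjective f) :
    Module.Projective A N ↔ Function.Injective f ∨ Subsingleton N := by
  refine ⟨fun hN => ?_, ?_⟩
  · obtain ⟨s, hs⟩ := Module.projective_lifting_property f LinearMap.id hf
    exact hM.injective_or_subsingleton_of_comp_eq_id hs
  · rintro (hinj | hN)
    · exact Module.Projective.of_equiv (LinearEquiv.ofBijective f ⟨hinj, hf⟩)
    · infer_instance

theorem finite (hM : Uniserial A M) [IsArtinianRing A] : Module.Finite A M := by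
  let ℓ : M → ℕ := fun x => natLength A (Submodule.span A {x})
  have hℓ : BddAbove (Set.range ℓ) := by
    refine ⟨natLength A A, ?_⟩
    rintro _ ⟨x, rfl⟩
    have := natLength_le_of_surjective (LinearMap.toSpanSingleton A M x).surjective_rangeRestrict
    rwa [LinearMap.range_toSpanSingleton] at this
  obtain ⟨x, hx⟩ := Nat.sSup_mem (Set.range_nonempty ℓ) hℓ
  have hmax : ∀ y, ℓ y ≤ ℓ x := fun y => hx ▸ le_csSup hℓ ⟨y, rfl⟩
  have htop : Submodule.span A {x} = ⊤ := by
    refine eq_top_iff.2 fun y _ => ?_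
    rcases hM (Submodule.span A {x}) (Submodule.span A {y}) with hxy | hyx
    · rw [hxy.eq_of_not_lt fun hlt => (hmax y).not_gt (natLength_lt_of_lt hlt)]
      exact Submodule.mem_span_singleton_self y
    · exact hyx (Submodule.mem_span_singleton_self y)
  exact Module.finite_def.2 (htop ▸ Submodule.fg_span_singleton x)

end Uniserial

end Uniserial

section Envelope

variable {A : Type} [Ring A] {M : Type} [AddCommGroup M] [Module A M] {S : Submodule A M}

theorem indec_of_isLeast (hS : IsLeast {K : Submodule A M | K ≠ ⊥} S) :
    Indec A (ModuleCat.of A M) := by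
  refine ⟨Submodule.nontrivial_iff A |>.1 ⟨S, ⊥, hS.1⟩, fun K L hKL => ?_⟩
  by_contra! h
  exact hS.1 (eq_bot_iff.2 (hKL.inf_eq_bot ▸ le_inf (hS.2 h.1) (hS.2 h.2)))

theorem isLeast_comap_subtype (hS : IsLeast {K : Submodule A M | K ≠ ⊥} S) {F : Submodule A M}
    (hF : F ≠ ⊥) : IsLeast {K : Submodule A F | K ≠ ⊥} (S.comap F.subtype) := by
  have hmap : (S.comap F.subtype).map F.subtype = S := by
    rw [Submodule.map_comap_subtype, inf_eq_right.2 (hS.2 hF)]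
  refine ⟨fun h => hS.1 (by rw [← hmap, h, Submodule.map_bot]), fun K hK => ?_⟩
  have hK' : K.map F.subtype ≠ ⊥ := fun h =>
    hK <| Submodule.map_injective_of_injective F.subtype_injective <|
      h.trans (Submodule.map_bot _).symm
  exact (Submodule.comap_mono (hS.2 hK')).trans
    (Submodule.comap_map_eq_of_injective F.subtype_injective K).le

theorem IsNakayama.uniserial_of_isLeast (hA : IsNakayama A)
    (hS : IsLeast {K : Submodule A M | K ≠ ⊥} S) : Uniserial A M := by
  intro K L
  by_contra! h
  obtain ⟨x, hxK, hxL⟩ := Set.not_subset.1 h.1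
  obtain ⟨y, hyL, hyK⟩ := Set.not_subset.1 h.2
  let F : Submodule A M := Submodule.span A {x, y}
  have hx : x ∈ F := Submodule.subset_span (Set.mem_insert x {y})
  have hy : y ∈ F := Submodule.subset_span (Set.mem_insert_of_mem x rfl)
  have hF : F ≠ ⊥ := (Submodule.ne_bot_iff F).2 ⟨x, hx, fun h0 => hxL (h0 ▸ L.zero_mem)⟩
  have hfin : Module.Finite A F := Module.Finite.span_of_finite A (Set.toFinite _)
  have huni : Uniserial A F :=
    hA (ModuleCat.of A F) hfin (indec_of_isLeast (isLeast_comap_subtype hS hF))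
  rcases huni (K.comap F.subtype) (L.comap F.subtype) with hKL | hLK
  · exact hxL (@hKL ⟨x, hx⟩ hxK)
  · exact hyK (@hLK ⟨y, hy⟩ hyL)

theorem exists_isLeast_quotient {x : M} (hx : x ≠ 0) : ∃ C : Submodule A M,
    IsLeast {K : Submodule A (M ⧸ C) | K ≠ ⊥} (Submodule.span A {C.mkQ x}) := by
  have hchain : ∀ c ⊆ {C : Submodule A M | x ∉ C}, IsChain (· ≤ ·) c → ∀ C ∈ c,
      ∃ ub ∈ {C : Submodule A M | x ∉ C}, ∀ D ∈ c, D ≤ ub := fun c hc hchain C hC => by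
    refine ⟨sSup c, fun hmem => ?_, fun D hD => le_sSup hD⟩
    obtain ⟨D, hD, hxD⟩ := (Submodule.mem_sSup_of_directed ⟨C, hC⟩ hchain.directedOn).1 hmem
    exact hc hD hxD
  obtain ⟨C, -, hxC, hmax⟩ := zorn_le_nonempty₀ _ hchain ⊥ (fun h => hx h)
  refine ⟨C, fun h => hxC ?_, fun K hK => ?_⟩
  · rwa [Submodule.span_singleton_eq_bot, Submodule.mkQ_apply, Submodule.Quotient.mk_eq_zero] at h
  · rw [Submodule.span_singleton_le_iff_mem]
    by_contra hxK
    have hle : K.comap C.mkQ ≤ C := hmax hxK (C.le_comap_mkQ K)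
    refine hK (eq_bot_iff.2 ?_)
    rw [← Submodule.map_comap_eq_of_surjective C.mkQ_surjective K]
    exact Submodule.map_le_iff_le_comap.2 (hle.trans (C.le_comap_mkQ ⊥))

theorem isInjectiveEnvelopeHom_iff {S I : ModuleCat.{0} A} [IsSimpleModule A S] {f : S ⟶ I} :
    IsInjectiveEnvelopeHom A f ↔
      Module.Injective A I ∧ IsLeast {K : Submodule A I | K ≠ ⊥} (LinearMap.range f.hom) := by
  have hnt := IsSimpleModule.nontrivial A S
  have hne : ∀ {X : ModuleCat.{0} A} (g : S ⟶ X), Mono g ↔ g.hom ≠ 0 := fun g => by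
    rw [ModuleCat.mono_iff_injective]
    refine ⟨fun hg h0 => ?_, LinearMap.injective_of_ne_zero⟩
    obtain ⟨s, hs⟩ := exists_ne (0 : S)
    exact hs (hg ((LinearMap.congr_fun h0 s).trans (LinearMap.congr_fun h0 0).symm))
  have hrange : LinearMap.range f.hom ≠ ⊥ ↔ Mono f := by
    rw [hne, ne_eq, LinearMap.range_eq_bot]
  rw [IsInjectiveEnvelopeHom, ← Module.injective_iff_injective_object, ← hrange]
  refine and_congr_right fun _ => and_congr_right fun _ => ⟨fun h K hK => ?_, fun h X g hfg => ?_⟩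
  · by_contra hle
    have hmono : Mono (f ≫ ModuleCat.ofHom K.mkQ) := (hne _).2 fun h0 => hle <| by
      rintro _ ⟨s, rfl⟩
      exact (Submodule.Quotient.mk_eq_zero K).1 (LinearMap.congr_fun h0 s)
    have := (ModuleCat.mono_iff_ker_eq_bot _).1 (h _ _ hmono)
    exact hK (by rwa [ModuleCat.hom_ofHom, Submodule.ker_mkQ] at this)
  · rw [ModuleCat.mono_iff_ker_eq_bot]
    by_contra hker
    refine (hne _).1 hfg (LinearMap.ext fun s => ?_)
    exact h hker ⟨s, rfl⟩

theorem injective_of_bijective_comp {J : Type} [AddCommGroup J] [Module A J]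
    (hJ : Module.Injective A J) {π : J →ₗ[A] M} {g : M →ₗ[A] J}
    (h : Function.Bijective (π ∘ₗ g)) : Module.Injective A M := by
  let e := LinearEquiv.ofBijective (π ∘ₗ g) h
  refine ⟨fun X Y _ _ _ _ i hi f => ?_⟩
  obtain ⟨k, hk⟩ := hJ.out i hi (g ∘ₗ e.symm.toLinearMap ∘ₗ f)
  exact ⟨π ∘ₗ k, fun x => (congrArg π (hk x)).trans (e.apply_symm_apply (f x))⟩

theorem IsNakayama.exists_isInjEnvOf [IsArtinianRing A] (hA : IsNakayama A) (S : ModuleCat.{0} A)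
    [IsSimpleModule A S] : ∃ I : ModuleCat.{0} A, IsInjEnvOf A S I := by
  let J : ModuleCat.{0} A := Injective.under S
  have hJ : Module.Injective A J :=
    (Module.injective_iff_injective_object A J).2 (Injective.injective_under S)
  let ι : S →ₗ[A] J := (Injective.ι S).hom
  have hι : Function.Injective ι := (ModuleCat.mono_iff_injective (Injective.ι S)).1 inferInstance
  have hnt := IsSimpleModule.nontrivial A S
  obtain ⟨s, hs⟩ := exists_ne (0 : S)
  obtain ⟨C, hC⟩ := exists_isLeast_quotient (A := A) ((map_ne_zero_iff ι hι).2 hs)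
  let f : S →ₗ[A] J ⧸ C := C.mkQ ∘ₗ ι
  have hfs : f s ≠ 0 := fun h => hC.1 (Submodule.span_singleton_eq_bot.2 h)
  have hrange : Submodule.span A {f s} = LinearMap.range f := by
    rw [LinearMap.range_eq_map, ← IsSimpleModule.span_singleton_eq_top A hs,
      Submodule.map_span, Set.image_singleton]
  have hf : Function.Injective f := LinearMap.injective_of_ne_zero fun h => hfs (by rw [h]; rfl)
  obtain ⟨g, hg⟩ := hJ.out f hf ι
  have hfin : Module.Finite A (J ⧸ C) := (hA.uniserial_of_isLeast hC).finite
  have hinj : Function.Injective (C.mkQ ∘ₗ g) := LinearMap.ker_eq_bot.1 <| by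
    by_contra hker
    have hmem := hC.2 hker (Submodule.mem_span_singleton_self (f s))
    exact hfs ((congrArg C.mkQ (hg s)).symm.trans hmem)
  have hE := injective_of_bijective_comp hJ (IsArtinian.bijective_of_injective_endomorphism _ hinj)
  exact ⟨ModuleCat.of A _, ModuleCat.ofHom f,
    isInjectiveEnvelopeHom_iff.2 ⟨hE, (hrange ▸ hC :)⟩⟩

end Envelope

section Projective

variable {A : Type} [Ring A]

theorem finite_setOf_exists_hom_ne_zero {ι : Type*} {S : ι → Type*} [∀ i, AddCommGroup (S i)]
    [∀ i, Module A (S i)] [∀ i, IsSimpleModule A (S i)]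
    (hS : ∀ i j, Nonempty (S i ≃ₗ[A] S j) → i = j) {M : Type*} [AddCommGroup M] [Module A M]
    (hM : IsFiniteLength A M) : {i | ∃ f : M →ₗ[A] S i, f ≠ 0}.Finite := by
  induction hM with
  | of_subsingleton =>
    refine Set.finite_empty.subset fun i ⟨f, hf⟩ => hf (Subsingleton.elim f 0)
  | @of_simple_quotient M _ _ K _ _ ih =>
    have hsub : {i | Nonempty ((M ⧸ K) ≃ₗ[A] S i)}.Subsingleton :=
      fun i ⟨e⟩ j ⟨e'⟩ => hS i j ⟨e.symm.trans e'⟩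
    refine (hsub.finite.union ih).subset fun i ⟨f, hf⟩ => ?_
    by_cases hK : f ∘ₗ K.subtype = 0
    · have hle : K ≤ LinearMap.ker f := fun x hx => LinearMap.congr_fun hK ⟨x, hx⟩
      refine Or.inl ⟨LinearEquiv.ofBijective (K.liftQ f hle) (LinearMap.bijective_of_ne_zero ?_)⟩
      exact fun h => hf (by rw [← K.liftQ_mkQ f hle, h, LinearMap.zero_comp])
    · exact Or.inr ⟨_, hK⟩

theorem projective_of_isCompl {M : Type*} [AddCommGroup M] [Module A M] [Module.Projective A M]
    {K L : Submodule A M} (hKL : IsCompl K L) : Module.Projective A K :=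
  Module.Projective.of_split K.subtype (K.projectionOnto L hKL) (by ext x; simp)

variable [IsArtinianRing A]

variable (A) in
theorem exists_finite_simple_representatives : ∃ (V : Type) (_ : Finite V)
    (S : V → ModuleCat.{0} A), (∀ v, IsSimpleModule A (S v)) ∧
      (∀ v w, Nonempty (S v ≃ₗ[A] S w) → v = w) ∧
      ∀ (T : Type) [AddCommGroup T] [Module A T] [IsSimpleModule A T],
        ∃ v, Nonempty (S v ≃ₗ[A] T) := by
  let r : Setoid {m : Ideal A // m.IsMaximal} :=
    { r := fun m n => Nonempty ((A ⧸ m.1) ≃ₗ[A] (A ⧸ n.1))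
      iseqv := ⟨fun _ => ⟨LinearEquiv.refl A _⟩, fun ⟨e⟩ => ⟨e.symm⟩,
        fun ⟨e⟩ ⟨e'⟩ => ⟨e.trans e'⟩⟩ }
  let S : Quotient r → ModuleCat.{0} A := fun v => ModuleCat.of A (A ⧸ v.out.1)
  have hsimple : ∀ v, IsSimpleModule A (S v) := fun v =>
    isSimpleModule_iff_quot_maximal.2 ⟨_, v.out.2, ⟨LinearEquiv.refl A _⟩⟩
  have hS : ∀ v w, Nonempty (S v ≃ₗ[A] S w) → v = w := fun v w h => by
    rw [← v.out_eq, ← w.out_eq]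
    exact Quotient.sound h
  have hfinite : Finite (Quotient r) := Set.finite_univ_iff.1 <|
    (finite_setOf_exists_hom_ne_zero (S := fun v => S v) hS
      ((isArtinianRing_iff_isFiniteLength A).1 inferInstance)).subset fun v _ => by
        have := IsSimpleModule.nontrivial A (S v)
        obtain ⟨s, hs⟩ := exists_ne (0 : S v)
        exact ⟨_, (LinearMap.toSpanSingleton_eq_zero_iff A (S v)).not.2 hs⟩
  refine ⟨Quotient r, hfinite, S, hsimple, hS, fun T _ _ _ => ?_⟩
  obtain ⟨m, hm, ⟨e⟩⟩ := isSimpleModule_iff_quot_maximal.1 ‹IsSimpleModule A T›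
  obtain ⟨e'⟩ : Nonempty (S (Quotient.mk r ⟨m, hm⟩) ≃ₗ[A] (A ⧸ m)) :=
    Quotient.mk_out (s := r) ⟨m, hm⟩
  exact ⟨_, ⟨e'.trans e.symm⟩⟩

theorem exists_indec_of_isCompl {Q : ModuleCat.{0} A → Prop} (hnt : ∀ M, Q M → Nontrivial M)
    (hQ : ∀ (M : ModuleCat.{0} A) (K L : Submodule A M), IsCompl K L → Q M →
      Q (ModuleCat.of A K) ∨ Q (ModuleCat.of A L))
    {M : ModuleCat.{0} A} (hM : Module.Finite A M) (hQM : Q M) :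
    ∃ N : ModuleCat.{0} A, Module.Finite A N ∧ Q N ∧ Indec A N := by
  obtain ⟨N, ⟨hN, hQN⟩, hmin⟩ := exists_minimalFor_of_wellFoundedLT
    (fun N : ModuleCat.{0} A => Module.Finite A N ∧ Q N) (fun N => natLength A N) ⟨M, hM, hQM⟩
  have htop : ∀ K : Submodule A N, Q (ModuleCat.of A K) → K = ⊤ := fun K hK => by
    by_contra hne
    have hlt : natLength A K < natLength A N := natLength_lt_of_ne_top hne
    exact hlt.not_ge (hmin ⟨Module.IsNoetherian.finite A K, hK⟩ hlt.le)
  refine ⟨N, hN, hQN, hnt N hQN, fun K L hKL => ?_⟩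
  rcases hQ N K L hKL hQN with hK | hL
  · exact Or.inr (by simpa [htop K hK] using hKL.inf_eq_bot)
  · exact Or.inl (by simpa [htop L hL] using hKL.inf_eq_bot)

theorem exists_indec_projective_hom_ne_zero (S : Type) [AddCommGroup S] [Module A S]
    [IsSimpleModule A S] : ∃ P : ModuleCat.{0} A, Module.Finite A P ∧
      (Module.Projective A P ∧ ∃ f : P →ₗ[A] S, f ≠ 0) ∧ Indec A P := by
  have := IsSimpleModule.nontrivial A S
  obtain ⟨s, hs⟩ := exists_ne (0 : S)
  refine exists_indec_of_isCompl ?_ ?_ (M := ModuleCat.of A A) (inferInstanceAs (Module.Finite A A))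
    ⟨inferInstanceAs (Module.Projective A A), LinearMap.toSpanSingleton A S s,
      (LinearMap.toSpanSingleton_eq_zero_iff A S).not.2 hs⟩
  · rintro P ⟨-, f, hf⟩
    by_contra hP
    rw [not_nontrivial_iff_subsingleton] at hP
    exact hf (Subsingleton.elim f 0)
  · rintro P K L hKL ⟨hP, f, hf⟩
    by_cases hK : f ∘ₗ K.subtype = 0
    · refine Or.inr ⟨projective_of_isCompl hKL.symm, f ∘ₗ L.subtype, fun hL => hf ?_⟩
      exact LinearMap.ext_on_codisjoint hKL.codisjoint
        (fun x hx => LinearMap.congr_fun hK ⟨x, hx⟩) (fun x hx => LinearMap.congr_fun hL ⟨x, hx⟩)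
    · exact Or.inl ⟨projective_of_isCompl hKL, _, hK⟩

variable (A) in
/-- Representatives `P v` of the indecomposable projective modules of a Nakayama algebra. They are
the projective covers of the simple modules, which are thus labelled by the same finite set `V`. -/
structure IndecProjectives where
  V : Type
  finite : Finite V
  P : V → ModuleCat.{0} A
  projective : ∀ v, Module.Projective A (P v)
  moduleFinite : ∀ v, Module.Finite A (P v)
  nontrivial : ∀ v, Nontrivial (P v)
  uniserial : ∀ v, Uniserial A (P v)
  exists_hom_ne_zero : ∀ (T : Type) [AddCommGroup T] [Module A T] [IsSimpleModule A T],
    ∃ v, ∃ f : P v →ₗ[A] T, f ≠ 0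
  eq_of_hom_ne_zero : ∀ {v w : V} {T : Type} [AddCommGroup T] [Module A T] [IsSimpleModule A T]
    {f : P v →ₗ[A] T} {g : P w →ₗ[A] T}, f ≠ 0 → g ≠ 0 → v = w

theorem IsNakayama.nonempty_indecProjectives (hA : IsNakayama A) :
    Nonempty (IndecProjectives A) := by
  obtain ⟨V, hV, S, hS, hS_inj, hS_surj⟩ := exists_finite_simple_representatives A
  choose P hfin hPS hind using fun v => exists_indec_projective_hom_ne_zero (A := A) (S v)
  choose hproj π hπ using hPS
  have huni : ∀ v, Uniserial A (P v) := fun v => hA (P v) (hfin v) (hind v)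
  refine ⟨⟨V, hV, P, hproj, hfin, fun v => (hind v).1, huni, fun T _ _ _ => ?_, ?_⟩⟩
  · obtain ⟨v, ⟨e⟩⟩ := hS_surj T
    exact ⟨v, e.toLinearMap ∘ₗ π v, fun h => hπ v <|
      (LinearMap.cancel_left e.injective).1 (h.trans (LinearMap.comp_zero _).symm)⟩
  · intro v w T _ _ _ f g hf hg
    obtain ⟨e⟩ := (huni v).nonempty_equiv_of_ne_zero (hπ v) hf
    obtain ⟨e'⟩ := (huni w).nonempty_equiv_of_ne_zero (hπ w) hg
    exact hS_inj v w ⟨e.trans e'.symm⟩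

end Projective

theorem exists_isSimpleModule_quotient {A M : Type*} [Ring A] [AddCommGroup M] [Module A M]
    [Module.Finite A M] [Nontrivial M] :
    ∃ K : Submodule A M, IsSimpleModule A (M ⧸ K) ∧ K.mkQ ≠ 0 := by
  obtain ⟨K, hK⟩ := IsCoatomic.exists_coatom (Submodule A M)
  have hsimple : IsSimpleModule A (M ⧸ K) := isSimpleModule_iff_isCoatom.2 hK
  have := IsSimpleModule.nontrivial A (M ⧸ K)
  exact ⟨K, hsimple, LinearMap.ne_zero_of_surjective K.mkQ_surjective⟩

namespace IndecProjectives

attribute [instance] finite projective moduleFinite nontrivial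

variable {A : Type} [Ring A] {d : IndecProjectives A} {v w : d.V} {M N : Type} [AddCommGroup M]
  [Module A M] [AddCommGroup N] [Module A N]

variable (d v M) in
/-- The module `M` is a quotient of `d.P v`. For `M ≠ 0` this says that `d.P v` is the projective
cover of `M`; the zero module is covered by every `d.P v`. -/
def Covers : Prop := ∃ f : d.P v →ₗ[A] M, Function.Surjective f

theorem Covers.of_surjective (h : d.Covers v M) {f : M →ₗ[A] N} (hf : Function.Surjective f) :
    d.Covers v N :=
  let ⟨g, hg⟩ := h
  ⟨f ∘ₗ g, hf.comp hg⟩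

theorem Covers.finite (h : d.Covers v M) : Module.Finite A M :=
  let ⟨g, hg⟩ := h
  Module.Finite.of_surjective g hg

theorem Covers.uniserial (h : d.Covers v M) : Uniserial A M :=
  let ⟨_, hg⟩ := h
  (d.uniserial v).of_surjective hg

theorem Covers.exists_hom_ne_zero (h : d.Covers v M) {f : M →ₗ[A] N} (hf : f ≠ 0) :
    ∃ g : d.P v →ₗ[A] N, g ≠ 0 :=
  let ⟨g, hg⟩ := h
  ⟨f ∘ₗ g, fun h0 => hf ((LinearMap.cancel_right hg).1 (h0.trans (LinearMap.zero_comp g).symm))⟩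

theorem Covers.label_unique [Nontrivial M] (h : d.Covers v M) (h' : d.Covers w M) : v = w := by
  have := h.finite
  obtain ⟨K, hK, hmkQ⟩ := exists_isSimpleModule_quotient (A := A) (M := M)
  obtain ⟨f, hf⟩ := h.exists_hom_ne_zero hmkQ
  obtain ⟨g, hg⟩ := h'.exists_hom_ne_zero hmkQ
  exact d.eq_of_hom_ne_zero hf hg

variable [IsArtinianRing A]

variable (d) in
theorem exists_covers [Nontrivial M] (hM : Uniserial A M) : ∃ v, d.Covers v M := by
  have := hM.finite
  obtain ⟨K, hK⟩ := IsCoatomic.exists_coatom (Submodule A M)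
  have : IsSimpleModule A (M ⧸ K) := isSimpleModule_iff_isCoatom.2 hK
  obtain ⟨v, g, hg⟩ := d.exists_hom_ne_zero (M ⧸ K)
  obtain ⟨f, rfl⟩ := Module.projective_lifting_property K.mkQ g K.mkQ_surjective
  refine ⟨v, f, LinearMap.range_eq_top.1 (hM.eq_top_of_not_le_coatom hK fun hle => hg ?_)⟩
  exact LinearMap.ext fun x => (Submodule.Quotient.mk_eq_zero K).2 (hle ⟨x, rfl⟩)

end IndecProjectives

section Successor

variable {A : Type} [Ring A] [IsArtinianRing A] {M N : Type} [AddCommGroup M] [Module A M]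
  [AddCommGroup N] [Module A N] {S : Type} [AddCommGroup S] [Module A S] [IsSimpleModule A S]

theorem IsNakayama.nonempty_equiv_of_natLength_eq (hA : IsNakayama A) (hM : Uniserial A M)
    (hN : Uniserial A N) (h : natLength A M = natLength A N) {i : S →ₗ[A] M}
    (hi : Function.Injective i) {j : S →ₗ[A] N} (hj : Function.Injective j) :
    Nonempty (M ≃ₗ[A] N) := by
  obtain ⟨I, ι, hι⟩ := hA.exists_isInjEnvOf (ModuleCat.of A S)
  have hι_inj : Function.Injective ι := (ModuleCat.mono_iff_injective ι).1 hι.2.1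
  obtain ⟨hI, hleast⟩ := isInjectiveEnvelopeHom_iff.1 hι
  have hIuni : Uniserial A I := hA.uniserial_of_isLeast hleast
  have hfin := hIuni.finite
  have := IsSimpleModule.nontrivial A S
  have hembed : ∀ {X : Type} [AddCommGroup X] [Module A X], Uniserial A X → ∀ k : S →ₗ[A] X,
      Function.Injective k → ∃ g : X →ₗ[A] I, Function.Injective g := fun hX k hk => by
    obtain ⟨g, hg⟩ := hI.out k hk ι.hom
    refine ⟨g, hX.injective_of_injective_comp (j := k) fun s t hst => hι_inj ?_⟩
    exact (hg s).symm.trans (Eq.trans hst (hg t))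
  obtain ⟨f, hf⟩ := hembed hM i hi
  obtain ⟨g, hg⟩ := hembed hN j hj
  let e := LinearEquiv.ofInjective f hf
  let e' := LinearEquiv.ofInjective g hg
  have hrange : LinearMap.range f = LinearMap.range g := hIuni.eq_of_natLength_eq <| by
    rw [← natLength_congr e, ← natLength_congr e', h]
  exact ⟨(e.trans (LinearEquiv.ofEq _ _ hrange)).trans e'.symm⟩

theorem exists_quotient_natLength_eq_two [Module.Finite A M] {K : Submodule A M} (hK : IsCoatom K)
    {g : K →ₗ[A] S} (hg : g ≠ 0) : ∃ L : Submodule A M, natLength A (M ⧸ L) = 2 ∧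
      ∃ i : S →ₗ[A] M ⧸ L, Function.Injective i := by
  have hsurj : Function.Surjective g := LinearMap.surjective_of_ne_zero hg
  have : Module.Finite A S := Module.Finite.of_surjective g hsurj
  have : IsSimpleModule A (M ⧸ K) := isSimpleModule_iff_isCoatom.2 hK
  let L : Submodule A M := (LinearMap.ker g).map K.subtype
  have hker : LinearMap.ker (L.mkQ ∘ₗ K.subtype) = LinearMap.ker g := by
    rw [LinearMap.ker_comp, Submodule.ker_mkQ,
      Submodule.comap_map_eq_of_injective K.subtype_injective]
  let i : (K ⧸ LinearMap.ker g) →ₗ[A] M ⧸ L :=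
    (LinearMap.ker g).liftQ (L.mkQ ∘ₗ K.subtype) hker.ge
  have hi : Function.Injective i :=
    LinearMap.ker_eq_bot.1 (Submodule.ker_liftQ_eq_bot _ _ _ hker.le)
  let e := g.quotKerEquivOfSurjective hsurj
  refine ⟨L, ?_, i ∘ₗ e.symm.toLinearMap, hi.comp e.symm.injective⟩
  have hL : natLength A L = natLength A (LinearMap.ker g) :=
    (natLength_congr (Submodule.equivMapOfInjective _ K.subtype_injective _)).symm
  have hS : natLength A S = 1 := natLength_eq_one_iff.2 inferInstance
  have hMK : natLength A (M ⧸ K) = 1 := natLength_eq_one_iff.2 inferInstance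
  have := natLength_quotient_add L
  have := natLength_quotient_add K
  have := natLength_add_ker hsurj
  omega

namespace IndecProjectives

variable {d : IndecProjectives A} {v v' w : d.V}

theorem eq_of_covers_coatom (hA : IsNakayama A) {K : Submodule A (d.P v)} (hK : IsCoatom K)
    (hK0 : K ≠ ⊥) {K' : Submodule A (d.P v')} (hK' : IsCoatom K') (hK0' : K' ≠ ⊥)
    (h : d.Covers w K) (h' : d.Covers w K') : v = v' := by
  have := Submodule.nontrivial_iff_ne_bot.2 hK0
  have := Submodule.nontrivial_iff_ne_bot.2 hK0'
  obtain ⟨N, hN, hmkQ⟩ := exists_isSimpleModule_quotient (A := A) (M := K)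
  obtain ⟨N', hN', hmkQ'⟩ := exists_isSimpleModule_quotient (A := A) (M := K')
  obtain ⟨f, hf⟩ := h.exists_hom_ne_zero hmkQ
  obtain ⟨f', hf'⟩ := h'.exists_hom_ne_zero hmkQ'
  obtain ⟨e⟩ := (d.uniserial w).nonempty_equiv_of_ne_zero hf' hf
  obtain ⟨L, hL, i, hi⟩ := exists_quotient_natLength_eq_two hK hmkQ
  obtain ⟨L', hL', i', hi'⟩ := exists_quotient_natLength_eq_two hK' hmkQ'
  obtain ⟨e'⟩ := hA.nonempty_equiv_of_natLength_eq
    ((d.uniserial v).of_surjective L.mkQ_surjective)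
    ((d.uniserial v').of_surjective L'.mkQ_surjective) (hL.trans hL'.symm)
    (i := i ∘ₗ e.toLinearMap) (hi.comp e.injective) hi'
  have := IsSimpleModule.nontrivial A (K' ⧸ N')
  have := hi'.nontrivial
  exact Covers.label_unique (M := d.P v' ⧸ L')
    ⟨e'.toLinearMap ∘ₗ L.mkQ, e'.surjective.comp L.mkQ_surjective⟩ ⟨L'.mkQ, L'.mkQ_surjective⟩

variable (d) in
theorem exists_perm (hA : IsNakayama A) : ∃ τ : Equiv.Perm d.V,
    ∀ v (K : Submodule A (d.P v)), IsCoatom K → d.Covers (τ v) K := by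
  classical
  choose K hK using fun v => IsCoatomic.exists_coatom (Submodule A (d.P v))
  have hex : ∀ v : {v // K v ≠ ⊥}, ∃ w, d.Covers w (K v) := fun v =>
    have := Submodule.nontrivial_iff_ne_bot.2 v.2
    d.exists_covers ((d.uniserial v).submodule (K v))
  choose t ht using hex
  have ht_inj : Function.Injective t := fun v v' h => Subtype.ext <|
    eq_of_covers_coatom hA (hK v) v.2 (hK v') v'.2 (ht v) (h ▸ ht v')
  let e : {v // K v ≠ ⊥} ≃ {w // w ∈ Set.range t} := Equiv.ofInjective t ht_inj
  refine ⟨e.extendSubtype, fun v L hL => ?_⟩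
  obtain rfl : L = K v := (d.uniserial v).coatom_unique hL (hK v)
  by_cases hv : K v = ⊥
  · exact ⟨0, fun x => ⟨0, (Submodule.subsingleton_iff_eq_bot.2 hv).elim _ _⟩⟩
  · rw [e.extendSubtype_apply_of_mem v hv]
    exact ht ⟨v, hv⟩

end IndecProjectives

end Successor

/-- The indecomposable projective modules of a Nakayama algebra, together with a permutation `τ` of
their labels such that `P (τ v)` covers the radical of `P v`. Where `P v` is simple, `τ v` is
arbitrary. The Kupisch series of the algebra is the sequence of lengths of `P v, P (τ v), …`. -/
structure KupischSeries (A : Type) [Ring A] extends IndecProjectives A where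
  τ : Equiv.Perm V
  covers_coatom : ∀ (v : V) (K : Submodule A (P v)), IsCoatom K →
    toIndecProjectives.Covers (τ v) K

theorem IsNakayama.nonempty_kupischSeries {A : Type} [Ring A] [IsArtinianRing A]
    (hA : IsNakayama A) : Nonempty (KupischSeries A) := by
  obtain ⟨d⟩ := hA.nonempty_indecProjectives
  obtain ⟨τ, hτ⟩ := d.exists_perm hA
  exact ⟨⟨d, τ, hτ⟩⟩

section Interval

open scoped AddConstMap

theorem exists_natLength_eq {A M : Type*} [Ring A] [AddCommGroup M] [Module A M] [IsArtinian A M]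
    [IsNoetherian A M] {n : ℕ} (hn : n ≤ natLength A M) :
    ∃ K : Submodule A M, natLength A K = n := by
  have hlength : natLength A M = Order.height (⊤ : Submodule A M) := by
    rw [coe_natLength, Module.length_eq_height]
  obtain ⟨s, hs_last, hs_length⟩ := Order.exists_series_of_height_eq_coe _ hlength.symm
  have hs := Order.height_eq_index_of_length_eq_height_last (p := s)
    (by rw [hs_last, hs_length, hlength]) ⟨n, by omega⟩
  exact ⟨_, by rw [natLength, Module.length_submodule, hs, ENat.toNat_natCast]⟩

namespace KupischSeries

variable {A : Type} [Ring A] {d : KupischSeries A} {v : d.V} {a b : ℤ}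
  {M N : Type} [AddCommGroup M] [Module A M] [AddCommGroup N] [Module A N]

variable (d v a b M) in
/-- `M` is encoded by the integer interval `[a, b)`: its composition factors from top to socle are
the tops of `P (τ ^ i v)` for `i = a, …, b - 1`. -/
structure IsInterval : Prop where
  covers : d.Covers ((d.τ ^ a) v) M
  natLength_eq : (natLength A M : ℤ) = b - a

variable (d v) in
/-- The Kupisch series in the form of the function `p` for which `P (τ ^ a v)` is encoded by
`[a, p a)`. -/
def coverEnd : ℤ →+c[(orderOf d.τ : ℤ), (orderOf d.τ : ℤ)] ℤ where
  toFun a := a + natLength A (d.P ((d.τ ^ a) v))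
  map_add_const' a := by
    rw [zpow_add, zpow_natCast, pow_orderOf_eq_one, mul_one, add_right_comm]

instance : NeZero (orderOf d.τ) := ⟨(orderOf_pos d.τ).ne'⟩

theorem isInterval_projective : d.IsInterval v a (d.coverEnd v a) (d.P ((d.τ ^ a) v)) :=
  ⟨⟨LinearMap.id, Function.surjective_id⟩, (add_sub_cancel_left _ _).symm⟩

variable (d v a) in
theorem lt_coverEnd [IsArtinianRing A] : a < d.coverEnd v a := by
  have hpos : natLength A (d.P ((d.τ ^ a) v)) ≠ 0 :=
    natLength_eq_zero_iff.not.2 (not_subsingleton _)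
  exact lt_add_of_pos_right a (by omega)

theorem zpow_add_one_apply : (d.τ ^ (a + 1)) v = d.τ ((d.τ ^ a) v) := by
  rw [add_comm, zpow_one_add, Equiv.Perm.mul_apply]

namespace IsInterval

theorem congr (h : d.IsInterval v a b M) (e : M ≃ₗ[A] N) : d.IsInterval v a b N :=
  ⟨h.covers.of_surjective e.surjective, natLength_congr e ▸ h.natLength_eq⟩

theorem base_unique {w : d.V} [Nontrivial M] (h : d.IsInterval v a b M)
    (h' : d.IsInterval w a b M) : v = w :=
  (d.τ ^ a).injective (h.covers.label_unique h'.covers)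

variable [IsArtinianRing A]

theorem nonempty_equiv (h : d.IsInterval v a b M) (h' : d.IsInterval v a b N) :
    Nonempty (M ≃ₗ[A] N) := by
  obtain ⟨⟨f, hf⟩, hM⟩ := h
  obtain ⟨⟨g, hg⟩, hN⟩ := h'
  have hker : LinearMap.ker f = LinearMap.ker g := (d.uniserial _).eq_of_natLength_eq <| by
    have := natLength_add_ker hf
    have := natLength_add_ker hg
    omega
  exact ⟨(f.quotKerEquivOfSurjective hf).symm.trans <|
    (Submodule.quotEquivOfEq _ _ hker).trans (g.quotKerEquivOfSurjective hg)⟩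

theorem le_coverEnd (h : d.IsInterval v a b M) : b ≤ d.coverEnd v a := by
  obtain ⟨⟨f, hf⟩, hM⟩ := h
  have := natLength_le_of_surjective hf
  change b ≤ a + natLength A (d.P ((d.τ ^ a) v))
  omega

theorem coatom (h : d.IsInterval v a b M) {K : Submodule A M} (hK : IsCoatom K) :
    d.IsInterval v (a + 1) b K := by
  have := h.covers.finite
  obtain ⟨⟨f, hf⟩, hM⟩ := h
  have hrestrict : Function.Surjective (f.restrict (p := K.comap f) (q := K) fun _ hx => hx) := by
    rintro ⟨y, hy⟩
    obtain ⟨x, rfl⟩ := hf y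
    exact ⟨⟨x, hy⟩, rfl⟩
  have hcomap : IsCoatom (K.comap f) := (Submodule.isCoatom_comap_iff hf).2 hK
  refine ⟨?_, ?_⟩
  · rw [zpow_add_one_apply]
    exact (d.covers_coatom _ _ hcomap).of_surjective hrestrict
  · have hquot : natLength A (M ⧸ K) = 1 :=
      natLength_eq_one_iff.2 (isSimpleModule_iff_isCoatom.2 hK)
    have := natLength_quotient_add K
    omega

theorem submodule (h : d.IsInterval v a b M) (K : Submodule A M) :
    d.IsInterval v (b - natLength A K) b K := by
  induction hn : natLength A M using Nat.strong_induction_on generalizing a M with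
  | _ n ih =>
    have := h.covers.finite
    rcases eq_top_or_exists_le_coatom K with rfl | ⟨L, hL, hKL⟩
    · have hlength := natLength_congr (Submodule.topEquiv (R := A) (M := M))
      have ha : b - natLength A (⊤ : Submodule A M) = a := by have := h.natLength_eq; omega
      exact ha.symm ▸ h.congr Submodule.topEquiv.symm
    · have hlt : natLength A L < n := hn ▸ natLength_lt_of_ne_top hL.1
      let e := Submodule.comapSubtypeEquivOfLe hKL
      exact natLength_congr e ▸ (ih _ hlt (h.coatom hL) (K.comap L.subtype) rfl).congr e

theorem ker {f : d.P ((d.τ ^ a) v) →ₗ[A] M} (hf : Function.Surjective f)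
    (h : (natLength A M : ℤ) = b - a) :
    d.IsInterval v b (d.coverEnd v a) (LinearMap.ker f) := by
  have hP := d.isInterval_projective (v := v) (a := a)
  have hb : d.coverEnd v a - natLength A (LinearMap.ker f) = b := by
    have := hP.natLength_eq
    have := natLength_add_ker hf
    omega
  exact hb ▸ hP.submodule (LinearMap.ker f)

theorem projective_iff (h : d.IsInterval v a b M) :
    Module.Projective A M ↔ a = b ∨ b = d.coverEnd v a := by
  have := h.covers.finite
  obtain ⟨⟨f, hf⟩, hM⟩ := h
  have hker := (IsInterval.ker hf hM).natLength_eq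
  rw [(d.uniserial _).projective_iff_of_surjective hf, ← LinearMap.ker_eq_bot,
    ← Submodule.subsingleton_iff_eq_bot, ← natLength_eq_zero_iff (A := A),
    ← natLength_eq_zero_iff (A := A)]
  omega

end IsInterval

variable [IsArtinianRing A]

variable (d v) in
theorem exists_isInterval (hab : a ≤ b) (hb : b ≤ d.coverEnd v a) :
    ∃ M : ModuleCat.{0} A, d.IsInterval v a b M := by
  have hP := d.isInterval_projective (v := v) (a := a) |>.natLength_eq
  obtain ⟨K, hK⟩ := exists_natLength_eq (A := A) (M := d.P ((d.τ ^ a) v))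
    (n := (d.coverEnd v a - b).toNat) (by omega)
  have hquot := natLength_quotient_add K
  exact ⟨ModuleCat.of A (d.P ((d.τ ^ a) v) ⧸ K), ⟨K.mkQ, K.mkQ_surjective⟩, by grind⟩

variable (d v) in
theorem monotone_coverEnd : Monotone (d.coverEnd v) := by
  refine monotone_int_of_le_succ fun a => ?_
  obtain ⟨K, hK⟩ := IsCoatomic.exists_coatom (Submodule A (d.P ((d.τ ^ a) v)))
  exact (isInterval_projective.coatom hK).le_coverEnd

end KupischSeries

end Interval

section ProjDim

variable {A : Type} [Ring A]

theorem hasProjectiveDimensionLE_kernel_iff {P M : ModuleCat.{0} A} (f : P ⟶ M) [Projective P]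
    [Epi f] {n : ℕ} : HasProjectiveDimensionLE (kernel f) n ↔ HasProjectiveDimensionLE M (n + 1) :=
  have hexact : (ShortComplex.mk (kernel.ι f) f (kernel.condition f)).ShortExact :=
    .mk' (ShortComplex.exact_kernel f) inferInstance inferInstance
  (hexact.hasProjectiveDimensionLT_X₃_iff n inferInstance).symm

theorem projDimLE_iff {M : ModuleCat.{0} A} {n : ℕ} :
    ProjDimLE A n M ↔ HasProjectiveDimensionLE M n := by
  constructor
  · intro h
    induction h with
    | zero M h => exact (projective_iff_hasProjectiveDimensionLE_zero M).1 h
    | succ n M P f _ _ _ ih => exact (hasProjectiveDimensionLE_kernel_iff f).1 ih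
  · intro h
    induction n generalizing M with
    | zero => exact .zero M ((projective_iff_hasProjectiveDimensionLE_zero M).2 h)
    | succ n ih =>
      exact .succ n M _ (Projective.π M) inferInstance inferInstance
        (ih ((hasProjectiveDimensionLE_kernel_iff _).2 h))

theorem projDim_le_iff {M : ModuleCat.{0} A} {n : ℕ} :
    projDim A M ≤ n ↔ HasProjectiveDimensionLE M n := by
  refine ⟨fun h => ?_, fun h => sInf_le ⟨n, rfl, projDimLE_iff.2 h⟩⟩
  have hlt : projDim A M < (n + 1 : ℕ) := h.trans_lt (by exact_mod_cast n.lt_succ_self)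
  obtain ⟨_, ⟨m, rfl, hm⟩, hmn⟩ := sInf_lt_iff.1 hlt
  have := projDimLE_iff.1 hm
  exact hasProjectiveDimensionLT_of_ge M (m + 1) (n + 1) (Nat.cast_lt.1 hmn)

variable {M N : Type} [AddCommGroup M] [Module A M] [AddCommGroup N] [Module A N] {n : ℕ}

theorem projDim_le_zero_iff : projDim A (ModuleCat.of A M) ≤ (0 : ℕ) ↔ Module.Projective A M := by
  rw [projDim_le_iff, ← projective_iff_hasProjectiveDimensionLE_zero, IsProjective.iff_projective]

theorem projDim_le_succ_iff [Module.Projective A M] {f : M →ₗ[A] N}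
    (hf : Function.Surjective f) : projDim A (ModuleCat.of A N) ≤ (n + 1 : ℕ) ↔
      projDim A (ModuleCat.of A (LinearMap.ker f)) ≤ n := by
  rw [projDim_le_iff, projDim_le_iff]
  exact (LinearMap.shortExact_shortComplexKer hf).hasProjectiveDimensionLT_X₃_iff n
    (inferInstanceAs (Projective (ModuleCat.of A M)))

theorem projDim_le_of_leftInverse {i : N →ₗ[A] M} {r : M →ₗ[A] N} (h : r ∘ₗ i = LinearMap.id)
    (hM : projDim A (ModuleCat.of A M) ≤ n) : projDim A (ModuleCat.of A N) ≤ n := by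
  rw [projDim_le_iff] at hM ⊢
  have hretract : Retract (ModuleCat.of A N) (ModuleCat.of A M) :=
    ⟨ModuleCat.ofHom i, ModuleCat.ofHom r, ModuleCat.hom_ext h⟩
  exact hretract.hasProjectiveDimensionLT (n + 1)

theorem projDim_le_iff_of_isCompl {K L : Submodule A M} (hKL : IsCompl K L) :
    projDim A (ModuleCat.of A M) ≤ n ↔
      projDim A (ModuleCat.of A K) ≤ n ∧ projDim A (ModuleCat.of A L) ≤ n := by
  refine ⟨fun h => ⟨?_, ?_⟩, fun ⟨hK, hL⟩ => ?_⟩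
  · exact projDim_le_of_leftInverse (Submodule.projectionOnto_comp_subtype hKL) h
  · exact projDim_le_of_leftInverse (Submodule.projectionOnto_comp_subtype hKL.symm) h
  · have hexact := LinearMap.shortExact_shortComplexKer (Submodule.projectionOnto_surjective hKL)
    rw [← Submodule.ker_projectionOnto hKL] at hL
    rw [projDim_le_iff] at hK hL ⊢
    exact hexact.hasProjectiveDimensionLT_X₂ (n + 1) hL hK

theorem KupischSeries.IsInterval.projDim_le_iff [IsArtinianRing A] {d : KupischSeries A} {v : d.V}
    {a b : ℤ} (h : d.IsInterval v a b M) :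
    projDim A (ModuleCat.of A M) ≤ n ↔ PdLE (d.coverEnd v) n a b := by
  induction n generalizing M a b with
  | zero => exact projDim_le_zero_iff.trans h.projective_iff
  | succ n ih =>
    obtain ⟨f, hf⟩ := h.covers
    exact (projDim_le_succ_iff hf).trans (ih (ker hf h.natLength_eq))

end ProjDim

section Reduction

variable {A : Type} [Ring A] [IsArtinianRing A]

theorem IsNakayama.exists_uniserial_projDim_eq_succ (hA : IsNakayama A) {M : ModuleCat.{0} A}
    (hM : Module.Finite A M) {n : ℕ} (hle : projDim A M ≤ (n + 1 : ℕ)) (hnle : ¬ projDim A M ≤ n) :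
    ∃ N : ModuleCat.{0} A, Nontrivial N ∧ Uniserial A N ∧ projDim A N ≤ (n + 1 : ℕ) ∧
      ¬ projDim A N ≤ n := by
  let Q : ModuleCat.{0} A → Prop := fun N => projDim A N ≤ (n + 1 : ℕ) ∧ ¬ projDim A N ≤ n
  have hnt : ∀ N, Q N → Nontrivial N := fun N hQ => by
    by_contra hsub
    rw [not_nontrivial_iff_subsingleton] at hsub
    have hzero : projDim A N ≤ (0 : ℕ) := projDim_le_zero_iff.2 (Module.Projective.of_free)
    exact hQ.2 (hzero.trans (Nat.cast_le.2 n.zero_le))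
  have hsplit : ∀ (N : ModuleCat.{0} A) (K L : Submodule A N), IsCompl K L → Q N →
      Q (ModuleCat.of A K) ∨ Q (ModuleCat.of A L) := fun N K L hKL ⟨hle, hnle⟩ => by
    have hle' := (projDim_le_iff_of_isCompl hKL).1 hle
    have hnle' := (projDim_le_iff_of_isCompl hKL).not.1 hnle
    simp only [Q]
    tauto
  obtain ⟨N, hN, hQ, hind⟩ := exists_indec_of_isCompl hnt hsplit hM ⟨hle, hnle⟩
  exact ⟨N, hind.1, hA N hN hind, hQ⟩

end Reduction

section Socle

variable {A : Type} [Ring A] [IsArtinianRing A] {d : KupischSeries A} {v : d.V} {a b j : ℤ}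
  {M : Type} [AddCommGroup M] [Module A M]

namespace KupischSeries

variable (d) in
theorem exists_isInterval_of_uniserial [Nontrivial M] (hM : Uniserial A M) (b : ℤ) :
    ∃ v, d.IsInterval v (b - natLength A M) b M := by
  obtain ⟨u, hu⟩ := d.exists_covers hM
  obtain ⟨v, rfl⟩ := (d.τ ^ (b - natLength A M)).surjective u
  exact ⟨v, hu, (sub_sub_cancel _ _).symm⟩

variable (d) in
theorem exists_isInterval_of_isSimpleModule [IsSimpleModule A M] (j : ℤ) :
    ∃ v, d.IsInterval v (j - 1) j M := by
  have := IsSimpleModule.nontrivial A M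
  have hM : Uniserial A M := .of_isSimpleModule
  have := hM.finite
  have hlength : natLength A M = 1 := natLength_eq_one_iff.2 inferInstance
  simpa only [hlength, Nat.cast_one] using d.exists_isInterval_of_uniserial hM j

theorem IsInterval.coverEnd_lt_of_injective [Nontrivial M] (h : d.IsInterval v a b M)
    (hM : Module.Injective A M) : d.coverEnd v (a - 1) < b := by
  by_contra! hb
  have hab := h.natLength_eq
  obtain ⟨X, hX⟩ := d.exists_isInterval v (a := a - 1) (by omega) hb
  have hlength := hX.natLength_eq
  have := hX.covers.finite
  have hX_nt : Nontrivial X := by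
    rw [← not_subsingleton_iff_nontrivial, ← natLength_eq_zero_iff (A := A)]
    omega
  obtain ⟨K, hK⟩ := IsCoatomic.exists_coatom (Submodule A X)
  obtain ⟨e⟩ := h.nonempty_equiv (sub_add_cancel a 1 ▸ hX.coatom hK)
  let i : M →ₗ[A] X := K.subtype ∘ₗ e.toLinearMap
  obtain ⟨r, hr⟩ := hM.out i (K.subtype_injective.comp e.injective) LinearMap.id
  rcases hX.covers.uniserial.injective_or_subsingleton_of_comp_eq_id (LinearMap.ext hr)
    with hinj | hsub
  · have := natLength_congr (LinearEquiv.ofBijective r ⟨hinj, fun x => ⟨i x, hr x⟩⟩)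
    omega
  · exact not_subsingleton M hsub

theorem IsInterval.exists_isInterval_injEnv (hA : IsNakayama A) {S I : ModuleCat.{0} A}
    [IsSimpleModule A S] (hS : d.IsInterval v (j - 1) j S) (hI : IsInjEnvOf A S I) :
    ∃ c < j, j ≤ d.coverEnd v c ∧ d.coverEnd v (c - 1) < j ∧ d.IsInterval v c j I := by
  obtain ⟨f, hf⟩ := hI
  have hf_inj : Function.Injective f.hom := (ModuleCat.mono_iff_injective f).1 hf.2.1
  obtain ⟨hinj, hleast⟩ := isInjectiveEnvelopeHom_iff.1 hf
  have hI_uni : Uniserial A I := hA.uniserial_of_isLeast hleast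
  have := IsSimpleModule.nontrivial A S
  have := hf_inj.nontrivial
  have := hI_uni.finite
  obtain ⟨w, hw⟩ := d.exists_isInterval_of_uniserial hI_uni j
  let e := LinearEquiv.ofInjective f.hom hf_inj
  have hsocle := (hw.submodule (LinearMap.range f.hom)).congr e.symm
  have hlength : natLength A (LinearMap.range f.hom) = 1 :=
    (natLength_congr e).symm.trans (natLength_eq_one_iff.2 inferInstance)
  rw [hlength, Nat.cast_one] at hsocle
  obtain rfl := hS.base_unique hsocle
  refine ⟨j - natLength A I, ?_, hw.le_coverEnd, hw.coverEnd_lt_of_injective hinj, hw⟩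
  have hpos : natLength A I ≠ 0 := natLength_eq_zero_iff.not.2 (not_subsingleton I)
  omega

end KupischSeries

end Socle

section Finitistic

variable {A : Type} [Ring A]

theorem projDim_le_finProDim {M : ModuleCat.{0} A} (hM : Module.Finite A M) {n : ℕ}
    (h : projDim A M ≤ n) : projDim A M ≤ finProDim A :=
  le_sSup ⟨M, hM, rfl, ne_top_of_le_ne_top (ENat.natCast_ne_top n) h⟩

variable [IsArtinianRing A]

theorem IsNakayama.exists_lt_projDim_injEnv (hA : IsNakayama A) {M : ModuleCat.{0} A}
    (hM : Module.Finite A M) {n : ℕ} (h : projDim A M = (n + 1 : ℕ)) :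
    ∃ S I : ModuleCat.{0} A, IsSimpleModule A S ∧ IsInjEnvOf A S I ∧
      n < projDim A S ∧ n < projDim A I := by
  obtain ⟨d⟩ := hA.nonempty_kupischSeries
  obtain ⟨N, hN_nt, hN, hle, hnle⟩ := hA.exists_uniserial_projDim_eq_succ hM (n := n) h.le (by
    rw [h, Nat.cast_le]; exact n.lt_succ_self.not_ge)
  obtain ⟨v, hv⟩ := d.exists_isInterval_of_uniserial hN 0
  rw [hv.projDim_le_iff] at hle hnle
  obtain ⟨j, hj⟩ := exists_not_pdLE (d.monotone_coverEnd v) hv.le_coverEnd hle hnle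
  obtain ⟨S, hS⟩ := d.exists_isInterval v (sub_one_lt j).le
    (Int.le_of_sub_one_lt (d.lt_coverEnd v (j - 1)))
  have hSfin := hS.covers.finite
  have hS_simple : IsSimpleModule A S := natLength_eq_one_iff.1 (by have := hS.natLength_eq; omega)
  obtain ⟨I, hI⟩ := hA.exists_isInjEnvOf S
  obtain ⟨c, hcj, -, -, hc⟩ := hS.exists_isInterval_injEnv hA hI
  refine ⟨S, I, hS_simple, hI, ?_, ?_⟩
  · exact not_le.1 (hS.projDim_le_iff.not.2 (hj _ (sub_one_lt j)))
  · exact not_le.1 (hc.projDim_le_iff.not.2 (hj c hcj))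

theorem IsNakayama.min_projDim_le_finProDim (hA : IsNakayama A) {S I : ModuleCat.{0} A}
    [IsSimpleModule A S] (hI : IsInjEnvOf A S I) :
    min (projDim A S) (projDim A I) ≤ finProDim A := by
  obtain ⟨d⟩ := hA.nonempty_kupischSeries
  obtain ⟨v, hS⟩ := d.exists_isInterval_of_isSimpleModule (M := S) 0
  obtain ⟨c, -, hjc, hlt, hc⟩ := hS.exists_isInterval_injEnv hA hI
  obtain ⟨n, hn | hn⟩ := exists_pdLE (d.monotone_coverEnd v) 0
  · exact min_le_of_left_le (projDim_le_finProDim hS.covers.finite (hS.projDim_le_iff.2 hn))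
  · exact min_le_of_right_le
      (projDim_le_finProDim hc.covers.finite (hc.projDim_le_iff.2 (hn c hjc hlt)))

end Finitistic

end ArtinAlg

open ArtinAlg in
theorem statement_12_general (A : Type) [Ring A] [IsArtinianRing A] (hNak : IsNakayama A) :
    finProDim A = sSup {x : ℕ∞ | ∃ S I : ModuleCat.{0} A, IsSimpleModule A ↥S ∧
      IsInjEnvOf A S I ∧ x = min (projDim A S) (projDim A I)} := by
  apply le_antisymm <;> refine sSup_le ?_
  · rintro x ⟨M, hM, rfl, hx⟩
    obtain ⟨m, hm⟩ := ENat.ne_top_iff_exists.1 hx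
    rw [← hm]
    rcases m with _ | n
    · exact zero_le
    obtain ⟨S, I, hS, hI, hnS, hnI⟩ := hNak.exists_lt_projDim_injEnv hM hm.symm
    refine le_sSup_of_le ⟨S, I, hS, hI, rfl⟩ ?_
    rw [Nat.cast_succ]
    exact Order.add_one_le_of_lt (lt_min hnS hnI)
  · rintro x ⟨S, I, hS, hI, rfl⟩
    exact hNak.min_projDim_le_finProDim hI

open ArtinAlg in
/-- Let `A` be a Nakayama algebra. Then `fin-pro A` is the maximum over
the simple modules `S` of `e(S) = min {pd S, pd (I S)}`. -/
theorem statement_12 (R : Type) [CommRing R] [IsArtinianRing R]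
    (A : Type) [Ring A] [Algebra R A] [Module.Finite R A]
    (hNak : IsNakayama A) :
    finProDim A = sSup {x : ℕ∞ | ∃ S I : ModuleCat.{0} A, IsSimpleModule A ↥S ∧
      IsInjEnvOf A S I ∧ x = min (projDim A S) (projDim A I)} := by
  have : IsArtinianRing A := IsArtinianRing.of_finite R A
  exact statement_12_general A hNak
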